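/- (Expressive power of InqML_⟹ with respect to information states) Assume the set P of atoms is finite. A state-property C (a class of state-pointed in-models) is definable in InqML_⟹ (i.e., C = {⟨M,s⟩ : M,s ⊨ φ} for some formula φ of L_⟹) if and only if C is closed under ∼ₙ for some n ∈ ℕ, nonempty, and downward closed. -/

import Mathlib

/-- Formulas of the inquisitive modal language `L_⟹`. -/
inductive Form (P : Type) : Type
  | atom : P → Form P
  | bot : Form P
  | and : Form P → Form P → Form P
  | impl : Form P → Form P → Form P
  | idisj : Form P → Form P → Form P
  | yields : Form P → Form P → Form P

/-- An inhabited neighborhood model (in-model). -/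
structure InModel (P : Type) where
  W : Type
  ne : Nonempty W
  Nb : W → Set (Set W)
  nb_nonempty : ∀ w, ∀ s ∈ Nb w, s.Nonempty
  V : W → P → Bool

/-- Support of a formula at an information state. -/
def support {P : Type} (M : InModel P) : Form P → Set M.W → Prop
  | .atom p, s => ∀ w ∈ s, M.V w p = true
  | .bot, s => s = ∅
  | .and φ ψ, s => support M φ s ∧ support M ψ s
  | .impl φ ψ, s => ∀ t : Set M.W, t ⊆ s → support M φ t → support M ψ t
  | .idisj φ ψ, s => support M φ s ∨ support M ψ s
  | .yields φ ψ, s => ∀ w ∈ s, ∀ t ∈ M.Nb w, support M φ t → support M ψ t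

/-- Truth at a world: support at the corresponding singleton state. -/
def truth {P : Type} (M : InModel P) (w : M.W) (φ : Form P) : Prop :=
  support M φ {w}

/-- A formula is truth-conditional if support at any state amounts to truth at
every world of the state. -/
def TruthConditional {P : Type} (φ : Form P) : Prop :=
  ∀ (M : InModel P) (s : Set M.W), support M φ s ↔ ∀ w ∈ s, truth M w φ

/-- Logical equivalence: same supporting states in every in-model. -/
def EquivF {P : Type} (φ ψ : Form P) : Prop :=
  ∀ (M : InModel P) (s : Set M.W), support M φ s ↔ support M ψ s

def Form.neg {P : Type} (φ : Form P) : Form P := .impl φ .bot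
def Form.top {P : Type} : Form P := Form.neg .bot
def Form.or {P : Type} (φ ψ : Form P) : Form P := Form.neg (.and (Form.neg φ) (Form.neg ψ))
def Form.box {P : Type} (φ : Form P) : Form P := .yields Form.top φ
def Form.dia {P : Type} (φ : Form P) : Form P := Form.neg (.yields φ .bot)
def Form.quest {P : Type} (φ : Form P) : Form P := .idisj φ (Form.neg φ)

/-- Declaratives: formulas where `⩔` occurs only within the scope of `⟹`. -/
inductive IsDecl {P : Type} : Form P → Prop
  | atom (p : P) : IsDecl (.atom p)
  | bot : IsDecl .bot
  | and {α β : Form P} : IsDecl α → IsDecl β → IsDecl (.and α β)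
  | impl {α β : Form P} : IsDecl α → IsDecl β → IsDecl (.impl α β)
  | yields (φ ψ : Form P) : IsDecl (.yields φ ψ)

/-- Modal depth. -/
def md {P : Type} : Form P → ℕ
  | .atom _ => 0
  | .bot => 0
  | .and φ ψ => max (md φ) (md ψ)
  | .impl φ ψ => max (md φ) (md ψ)
  | .idisj φ ψ => max (md φ) (md ψ)
  | .yields φ ψ => max (md φ) (md ψ) + 1

/-- Egli-Milner lifting of a relation between worlds to states. -/
def EM {P : Type} {M M' : InModel P} (Z : M.W → M'.W → Prop)
    (s : Set M.W) (s' : Set M'.W) : Prop :=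
  (∀ w ∈ s, ∃ w' ∈ s', Z w w') ∧ (∀ w' ∈ s', ∃ w ∈ s, Z w w')

/-- `Z` is an `n`-bisimulation between `M` and `M'` (indices `i ≤ n`). -/
def IsNBisim {P : Type} (M M' : InModel P) (n : ℕ)
    (Z : ℕ → M.W → M'.W → Prop) : Prop :=
  ∀ i ≤ n, ∀ w w', Z i w w' →
    (∀ p : P, M.V w p = M'.V w' p) ∧
    (∀ j : ℕ, i = j + 1 →
      (∀ s ∈ M.Nb w, ∃ s' ∈ M'.Nb w', EM (Z j) s s') ∧
      (∀ s' ∈ M'.Nb w', ∃ s ∈ M.Nb w, EM (Z j) s s'))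

/-- `n`-bisimilarity of world-pointed models. -/
def NBisimW {P : Type} (n : ℕ) (M : InModel P) (w : M.W)
    (M' : InModel P) (w' : M'.W) : Prop :=
  ∃ Z, IsNBisim M M' n Z ∧ Z n w w'

/-- `n`-bisimilarity of state-pointed models. -/
def NBisimS {P : Type} (n : ℕ) (M : InModel P) (s : Set M.W)
    (M' : InModel P) (s' : Set M'.W) : Prop :=
  ∃ Z, IsNBisim M M' n Z ∧ EM (Z n) s s'

/-- `Z` is a bisimulation between `M` and `M'`. -/
def IsBisim {P : Type} (M M' : InModel P) (Z : M.W → M'.W → Prop) : Prop :=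
  (∃ w w', Z w w') ∧
  ∀ w w', Z w w' →
    (∀ p : P, M.V w p = M'.V w' p) ∧
    (∀ s ∈ M.Nb w, ∃ s' ∈ M'.Nb w', EM Z s s') ∧
    (∀ s' ∈ M'.Nb w', ∃ s ∈ M.Nb w, EM Z s s')

/-- Bisimilarity of world-pointed models. -/
def BisimW {P : Type} (M : InModel P) (w : M.W)
    (M' : InModel P) (w' : M'.W) : Prop :=
  ∃ Z, IsBisim M M' Z ∧ Z w w'

/-- Bisimilarity of state-pointed models. -/
def BisimS {P : Type} (M : InModel P) (s : Set M.W)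
    (M' : InModel P) (s' : Set M'.W) : Prop :=
  ∃ Z, IsBisim M M' Z ∧ EM Z s s'

theorem support_empty {P : Type} (M : InModel P) (φ : Form P) : support M φ ∅ := by
  induction φ with
  | atom p => intro w hw; exact hw.elim
  | bot => rfl
  | and φ ψ h1 h2 => exact ⟨h1, h2⟩
  | impl φ ψ h1 h2 =>
    intro t ht _
    rw [Set.subset_empty_iff.1 ht]; exact h2
  | idisj φ ψ h1 h2 => exact Or.inl h1
  | yields φ ψ h1 h2 => intro w hw; exact hw.elim

theorem support_mono {P : Type} (M : InModel P) (φ : Form P) :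
    ∀ s t : Set M.W, support M φ s → t ⊆ s → support M φ t := by
  induction φ with
  | atom p => intro s t h hts w hw; exact h w (hts hw)
  | bot => intro s t h hts; exact Set.subset_empty_iff.1 (h ▸ hts)
  | and φ ψ h1 h2 => intro s t h hts; exact ⟨h1 s t h.1 hts, h2 s t h.2 hts⟩
  | impl φ ψ h1 h2 => intro s t h hts u hu; exact h u (hu.trans hts)
  | idisj φ ψ h1 h2 =>
    intro s t h hts
    exact h.imp (fun h => h1 s t h hts) (fun h => h2 s t h hts)
  | yields φ ψ h1 h2 => intro s t h hts w hw; exact h w (hts hw)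

theorem support_inv {P : Type} {M M' : InModel P} {n : ℕ} {Z : ℕ → M.W → M'.W → Prop}
    (hZ : IsNBisim M M' n Z) (φ : Form P) :
    ∀ i ≤ n, md φ ≤ i → ∀ (s : Set M.W) (s' : Set M'.W), EM (Z i) s s' →
      (support M φ s ↔ support M' φ s') := by
  induction φ with
  | atom p =>
    intro i hi _ s s' h
    constructor
    · intro hs w' hw'
      obtain ⟨w, hw, hz⟩ := h.2 w' hw'
      rw [← (hZ i hi w w' hz).1 p]; exact hs w hw
    · intro hs w hw
      obtain ⟨w', hw', hz⟩ := h.1 w hw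
      rw [(hZ i hi w w' hz).1 p]; exact hs w' hw'
  | bot =>
    intro i hi _ s s' h
    simp only [support, Set.eq_empty_iff_forall_notMem]
    constructor
    · intro hs w' hw'
      obtain ⟨w, hw, hz⟩ := h.2 w' hw'
      exact hs w hw
    · intro hs w hw
      obtain ⟨w', hw', hz⟩ := h.1 w hw
      exact hs w' hw'
  | and φ ψ h1 h2 =>
    intro i hi hm s s' h
    simp only [md, max_le_iff] at hm
    exact and_congr (h1 i hi hm.1 s s' h) (h2 i hi hm.2 s s' h)
  | idisj φ ψ h1 h2 =>
    intro i hi hm s s' h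
    simp only [md, max_le_iff] at hm
    exact or_congr (h1 i hi hm.1 s s' h) (h2 i hi hm.2 s s' h)
  | impl φ ψ h1 h2 =>
    intro i hi hm s s' h
    simp only [md, max_le_iff] at hm
    constructor
    · intro hs t' ht' hφ
      have e : EM (Z i) {w ∈ s | ∃ w' ∈ t', Z i w w'} t' := by
        refine ⟨fun w hw => hw.2, fun w' hw' => ?_⟩
        obtain ⟨w, hw, hz⟩ := h.2 w' (ht' hw')
        exact ⟨w, ⟨hw, w', hw', hz⟩, hz⟩
      exact (h2 i hi hm.2 _ _ e).1 (hs _ (fun w hw => hw.1) ((h1 i hi hm.1 _ _ e).2 hφ))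
    · intro hs t ht hφ
      have e : EM (Z i) t {w' ∈ s' | ∃ w ∈ t, Z i w w'} := by
        refine ⟨fun w hw => ?_, fun w' hw' => hw'.2⟩
        obtain ⟨w', hw', hz⟩ := h.1 w (ht hw)
        exact ⟨w', ⟨hw', w, hw, hz⟩, hz⟩
      exact (h2 i hi hm.2 _ _ e).2 (hs _ (fun w hw => hw.1) ((h1 i hi hm.1 _ _ e).1 hφ))
  | yields φ ψ h1 h2 =>
    intro i hi hm s s' h
    simp only [md] at hm
    obtain ⟨j, rfl⟩ : ∃ j, i = j + 1 := ⟨i - 1, by omega⟩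
    have hm1 : md φ ≤ j := by omega
    have hm2 : md ψ ≤ j := by omega
    have hj : j ≤ n := by omega
    constructor
    · intro hs w' hw' t' ht' hφ
      obtain ⟨w, hw, hz⟩ := h.2 w' hw'
      obtain ⟨t, ht, e⟩ := ((hZ _ hi w w' hz).2 j rfl).2 t' ht'
      exact (h2 j hj hm2 _ _ e).1 (hs w hw t ht ((h1 j hj hm1 _ _ e).2 hφ))
    · intro hs w hw t ht hφ
      obtain ⟨w', hw', hz⟩ := h.1 w hw
      obtain ⟨t', ht', e⟩ := ((hZ _ hi w w' hz).2 j rfl).1 t ht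
      exact (h2 j hj hm2 _ _ e).2 (hs w' hw' t' ht' ((h1 j hj hm1 _ _ e).1 hφ))

/-- The type of `n`-bisimulation types. -/
def Tp (P : Type) : ℕ → Type
  | 0 => P → Bool
  | n + 1 => (P → Bool) × Set (Set (Tp P n))

theorem Tp_finite (P : Type) [Finite P] : ∀ n, Finite (Tp P n)
  | 0 => inferInstanceAs (Finite (P → Bool))
  | n + 1 => by
    have := Tp_finite P n
    exact inferInstanceAs (Finite ((P → Bool) × Set (Set (Tp P n))))

/-- The `n`-bisimulation type of a world. -/
def tp {P : Type} (M : InModel P) : (n : ℕ) → M.W → Tp P n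
  | 0, w => M.V w
  | n + 1, w => (M.V w, {A | ∃ t ∈ M.Nb w, tp M n '' t = A})

theorem EM_of_image {P : Type} {M M' : InModel P} {n : ℕ} {s : Set M.W} {s' : Set M'.W}
    (h : tp M n '' s = tp M' n '' s') :
    EM (fun w w' => tp M n w = tp M' n w') s s' := by
  constructor
  · intro w hw
    have : tp M n w ∈ tp M' n '' s' := h ▸ Set.mem_image_of_mem _ hw
    obtain ⟨w', hw', e⟩ := this
    exact ⟨w', hw', e.symm⟩
  · intro w' hw'
    have : tp M' n w' ∈ tp M n '' s := h ▸ Set.mem_image_of_mem _ hw'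
    exact this

theorem tp_bisim {P : Type} (M M' : InModel P) (n : ℕ) :
    IsNBisim M M' n (fun i w w' => tp M i w = tp M' i w') := by
  intro i _ w w' h
  constructor
  · intro p
    cases i with
    | zero => exact congrFun h p
    | succ i => exact congrFun (congrArg Prod.fst h) p
  · rintro j rfl
    have h2 : {A | ∃ t ∈ M.Nb w, tp M j '' t = A} = {A | ∃ t ∈ M'.Nb w', tp M' j '' t = A} :=
      congrArg Prod.snd h
    constructor
    · intro s hs
      have : tp M j '' s ∈ {A | ∃ t ∈ M'.Nb w', tp M' j '' t = A} := h2 ▸ ⟨s, hs, rfl⟩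
      obtain ⟨t, ht, e⟩ := this
      exact ⟨t, ht, EM_of_image e.symm⟩
    · intro s hs
      have : tp M' j '' s ∈ {A | ∃ t ∈ M.Nb w, tp M j '' t = A} := h2 ▸ ⟨s, hs, rfl⟩
      obtain ⟨t, ht, e⟩ := this
      exact ⟨t, ht, EM_of_image e⟩

/-- A set of types is defined by some (flat) formula. -/
def Dfn {P : Type} (n : ℕ) (X : Set (Tp P n)) : Prop :=
  ∃ φ : Form P, ∀ (M : InModel P) (s : Set M.W), support M φ s ↔ ∀ w ∈ s, tp M n w ∈ X

theorem Dfn_empty {P : Type} (n : ℕ) : Dfn (P := P) n ∅ :=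
  ⟨.bot, fun M s => by simp [support, Set.eq_empty_iff_forall_notMem]⟩

theorem Dfn_compl {P : Type} {n : ℕ} {X : Set (Tp P n)} (h : Dfn n X) : Dfn n Xᶜ := by
  obtain ⟨φ, hφ⟩ := h
  refine ⟨.impl φ .bot, fun M s => ?_⟩
  simp only [support, hφ]
  constructor
  · intro h w hw hX
    have := h {w} (by simpa using hw) (by simpa using hX)
    exact Set.singleton_ne_empty w this
  · intro h t ht hX
    exact Set.eq_empty_iff_forall_notMem.2 fun w hw => h w (ht hw) (hX w hw)

theorem Dfn_inter {P : Type} {n : ℕ} {X Y : Set (Tp P n)} (hX : Dfn n X) (hY : Dfn n Y) :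
    Dfn n (X ∩ Y) := by
  obtain ⟨φ, hφ⟩ := hX
  obtain ⟨ψ, hψ⟩ := hY
  refine ⟨.and φ ψ, fun M s => ?_⟩
  simp only [support, hφ, hψ]
  exact ⟨fun h w hw => ⟨h.1 w hw, h.2 w hw⟩,
    fun h => ⟨fun w hw => (h w hw).1, fun w hw => (h w hw).2⟩⟩

/-- A Boolean algebra of subsets of a finite type separating points is everything. -/
theorem all_of_sep {T : Type} [Finite T] (D : Set T → Prop) (h0 : D ∅)
    (hc : ∀ X, D X → D Xᶜ) (hi : ∀ X Y, D X → D Y → D (X ∩ Y))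
    (hs : ∀ x y, x ≠ y → ∃ X, D X ∧ x ∈ X ∧ y ∉ X) (X : Set T) : D X := by
  have hsing : ∀ x, D {x} := by
    intro x
    have key : ∀ S : Set T, x ∉ S → ∃ Y, D Y ∧ x ∈ Y ∧ Disjoint Y S := by
      intro S
      induction S, Set.toFinite S using Set.Finite.induction_on with
      | empty => exact fun _ => ⟨∅ᶜ, hc _ h0, by simp, by simp⟩
      | @insert a S ha hS ih =>
        intro hx
        rw [Set.mem_insert_iff, not_or] at hx
        obtain ⟨Y, hY, hxY, hd⟩ := ih hx.2
        obtain ⟨Z, hZ, hxZ, haZ⟩ := hs x a hx.1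
        refine ⟨Y ∩ Z, hi _ _ hY hZ, ⟨hxY, hxZ⟩, ?_⟩
        rw [Set.disjoint_left] at hd ⊢
        rintro b ⟨hbY, hbZ⟩ hb
        rcases hb with rfl | hb
        · exact haZ hbZ
        · exact hd hbY hb
    obtain ⟨Y, hY, hxY, hd⟩ := key {x}ᶜ (by simp)
    have : Y = {x} := by
      rw [Set.disjoint_compl_right_iff_subset] at hd
      exact hd.antisymm (by simpa using hxY)
    exact this ▸ hY
  induction X, Set.toFinite X using Set.Finite.induction_on with
  | empty => exact h0
  | @insert a S ha hS ih =>
    have : insert a S = (({a} : Set T)ᶜ ∩ Sᶜ)ᶜ := by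
      rw [Set.compl_inter, compl_compl, compl_compl]; rfl
    rw [this]
    exact hc _ (hi _ _ (hc _ (hsing a)) (hc _ ih))

theorem exists_bigdisj {P ι : Type} (f : ι → Form P) {S : Set ι} (hS : S.Finite) :
    ∃ φ : Form P, ∀ (M : InModel P) (s : Set M.W),
      support M φ s ↔ s = ∅ ∨ ∃ a ∈ S, support M (f a) s := by
  induction S, hS using Set.Finite.induction_on with
  | empty => exact ⟨.bot, fun M s => by simp [support]⟩
  | @insert a S ha hS ih =>
    obtain ⟨φ, hφ⟩ := ih
    refine ⟨.idisj (f a) φ, fun M s => ?_⟩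
    simp only [support, hφ, Set.exists_mem_insert]
    tauto

theorem Dfn_all {P : Type} [Finite P] : ∀ (n : ℕ) (X : Set (Tp P n)), Dfn n X
  | 0 => by
    have := Tp_finite P 0
    have hat : ∀ p : P, Dfn (P := P) 0 {x : P → Bool | x p = true} := fun p =>
      ⟨.atom p, fun M s => Iff.rfl⟩
    refine all_of_sep _ (Dfn_empty 0) (fun _ => Dfn_compl) (fun _ _ => Dfn_inter) ?_
    intro x y hxy
    obtain ⟨p, hp⟩ := Function.ne_iff.1 (show (x : P → Bool) ≠ y from hxy)
    cases hx : x p with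
    | true => 
      refine ⟨_, hat p, hx, fun hy => hp (hx.trans ?_)⟩
      exact (Eq.symm hy)
    | false =>
      refine ⟨_, Dfn_compl (hat p), ?_, ?_⟩
      · intro (h : x p = true)
        rw [hx] at h; cases h
      · intro h
        refine h (?_ : y p = true)
        rw [hx] at hp
        cases hy : y p with
        | true => rfl
        | false => exact absurd hy.symm hp
  | n + 1 => by
    have ih := Dfn_all (P := P) n
    have := Tp_finite P n
    have := Tp_finite P (n + 1)
    have hat : ∀ p : P, Dfn (P := P) (n + 1)
        {x : (P → Bool) × Set (Set (Tp P n)) | x.1 p = true} := fun p =>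
      ⟨.atom p, fun M s => Iff.rfl⟩
    have hnb : ∀ A : Set (Tp P n), Dfn (P := P) (n + 1)
        {x : (P → Bool) × Set (Set (Tp P n)) | A ∉ x.2} := by
      intro A
      choose θ hθ using ih
      obtain ⟨ψ, hψ⟩ := exists_bigdisj (fun a : Tp P n => θ (A \ {a})) (Set.toFinite A)
      refine ⟨.yields (θ A) ψ, fun M s => ?_⟩
      simp only [support, hψ, hθ]
      refine forall₂_congr fun w hw => ?_
      change _ ↔ ¬ ∃ t ∈ M.Nb w, tp M n '' t = A
      constructor
      · rintro h ⟨t, ht, rfl⟩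
        rcases h t ht (fun v hv => Set.mem_image_of_mem _ hv) with h | ⟨a, ⟨v, hv, rfl⟩, h⟩
        · exact (M.nb_nonempty w t ht).ne_empty h
        · exact (h v hv).2 rfl
      · intro h t ht hA
        right
        by_contra hcon
        refine h ⟨t, ht, Set.Subset.antisymm (Set.image_subset_iff.2 hA) fun a ha => ?_⟩
        by_contra hna
        refine hcon ⟨a, ha, fun v hv => ⟨hA v hv, ?_⟩⟩
        rintro rfl
        exact hna ⟨v, hv, rfl⟩
    refine all_of_sep _ (Dfn_empty _) (fun _ => Dfn_compl) (fun _ _ => Dfn_inter) ?_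
    have sep : ∀ (x y : Tp P (n + 1)) (X : Set (Tp P (n + 1))), Dfn (n + 1) X →
        ¬ (x ∈ X ↔ y ∈ X) → ∃ X, Dfn (n + 1) X ∧ x ∈ X ∧ y ∉ X := by
      intro x y X hX h
      by_cases hx : x ∈ X
      · exact ⟨X, hX, hx, by tauto⟩
      · exact ⟨Xᶜ, Dfn_compl hX, hx, by simp only [Set.mem_compl_iff]; tauto⟩
    intro x y hxy
    by_contra hcon
    apply hxy
    have key := fun X hX => not_not.1 (fun h => hcon (sep x y X hX h))
    refine Prod.ext (funext fun p => ?_) (Set.ext fun A => ?_)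
    · exact Bool.eq_iff_iff.2 (key _ (hat p))
    · exact not_iff_not.1 (key _ (hnb A))

/-- over a finite set of atoms, a state-property is definable in
`InqML_⟹` iff it is closed under `∼ₙ` for some `n`, nonempty, and downward
closed. -/
theorem expressive_power_states {P : Type} [Fintype P]
    (C : ∀ M : InModel P, Set M.W → Prop) :
    (∃ φ : Form P, ∀ (M : InModel P) (s : Set M.W), C M s ↔ support M φ s) ↔
    ((∃ n : ℕ, ∀ (M M' : InModel P) (s : Set M.W) (s' : Set M'.W),
        C M s → NBisimS n M s M' s' → C M' s') ∧
      (∃ (M : InModel P) (s : Set M.W), C M s) ∧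
      (∀ (M : InModel P) (s t : Set M.W), C M s → t ⊆ s → C M t)) := by
  constructor
  · rintro ⟨φ, hφ⟩
    refine ⟨⟨md φ, ?_⟩, ?_, ?_⟩
    · rintro M M' s s' hC ⟨Z, hZ, e⟩
      rw [hφ] at hC ⊢
      exact (support_inv hZ φ (md φ) le_rfl le_rfl s s' e).1 hC
    · let M : InModel P := ⟨Unit, ⟨()⟩, fun _ => ∅, fun _ _ h => h.elim, fun _ _ => true⟩
      exact ⟨M, ∅, (hφ _ _).2 (support_empty _ _)⟩
    · intro M s t hC hts
      rw [hφ] at hC ⊢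
      exact support_mono M φ s t hC hts
  · rintro ⟨⟨n, hn⟩, ⟨M₀, s₀, h₀⟩, hd⟩
    have := Tp_finite P n
    have himg : ∀ (M M' : InModel P) (s : Set M.W) (s' : Set M'.W),
        C M s → tp M n '' s = tp M' n '' s' → C M' s' := fun M M' s s' hC e =>
      hn M M' s s' hC ⟨_, tp_bisim M M' n, EM_of_image e⟩
    choose θ hθ using Dfn_all (P := P) n
    obtain ⟨φ, hφ⟩ := exists_bigdisj θ
      (Set.toFinite {A : Set (Tp P n) | ∃ (M : InModel P) (s : Set M.W), C M s ∧ tp M n '' s = A})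
    refine ⟨φ, fun M s => ?_⟩
    rw [hφ]
    constructor
    · intro h
      exact Or.inr ⟨_, ⟨M, s, h, rfl⟩, (hθ _ M s).2 fun w hw => Set.mem_image_of_mem _ hw⟩
    · rintro (rfl | ⟨_, ⟨M₁, s₁, h₁, rfl⟩, h⟩)
      · exact himg M₀ M ∅ ∅ (hd _ _ _ h₀ (Set.empty_subset _)) (by simp)
      · rw [hθ] at h
        refine himg M₁ M {v ∈ s₁ | tp M₁ n v ∈ tp M n '' s} s
          (hd _ _ _ h₁ fun v hv => hv.1) (Set.Subset.antisymm ?_ ?_)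
        · rintro _ ⟨v, hv, rfl⟩
          exact hv.2
        · rintro _ ⟨w, hw, rfl⟩
          obtain ⟨v, hv, e⟩ := h w hw
          exact ⟨v, ⟨hv, w, hw, e.symm⟩, e⟩
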